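/- Let L and S be positive integers with S ≥ L+2, let γ ∈ (0,1) be the positive root of Lγ + Sγ² = 1, set 1−τ = −log(Sγ)/log γ, and let (ξ^j)_{j≥1} be the (L,S)-sequence of points. For each N, let P_{L,S}(N) = { ((n−1)/N, ξⁿ) : n = 1, …, N } be the (L,S)-point set à la van der Corput of order N. Then there exists a constant C₃ > 0 such that for every integer N ≥ 2 one has N · D₂(P_{L,S}(N)) ≤ C₃ · N^{1−τ} · log N. -/

import Mathlib

open Finset Real

noncomputable section

/-- The `k`-th digit of `n` in base `b`. -/
def lsDigit (b n k : ℕ) : ℕ := n / b ^ k % b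

/-- Membership in the set `N_{L,S}`: for every `k`, the pair of consecutive digits
`(a_k(n), a_{k+1}(n))` in base `L+S` does not lie in
`{L,…,L+S−1} × {1,…,L+S−1}`. -/
def memNLS (L S n : ℕ) : Prop :=
  ∀ k : ℕ, ¬ (L ≤ lsDigit (L + S) n k ∧ lsDigit (L + S) n k ≤ L + S - 1 ∧
      1 ≤ lsDigit (L + S) n (k + 1) ∧ lsDigit (L + S) n (k + 1) ≤ L + S - 1)

/-- The modified digit `ã`: `ã = a` if `a ≤ L−1`, and `ã = L + γ(a−L)` if `L ≤ a`. -/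
def lsTilde (L : ℕ) (γ : ℝ) (a : ℕ) : ℝ :=
  if a < L then (a : ℝ) else (L : ℝ) + γ * ((a : ℝ) - (L : ℝ))

/-- The radical-inverse-type function `φ_{L,S}(n) = Σ_{k=0}^{M} ã_k(n) γ^{k+1}`,
with `M = ⌊log_{L+S} n⌋`. -/
def lsPhi (L S : ℕ) (γ : ℝ) (n : ℕ) : ℝ :=
  ∑ k ∈ Finset.range (Nat.log (L + S) n + 1),
    lsTilde L γ (lsDigit (L + S) n k) * γ ^ (k + 1)

/-- The `(L,S)`-sequence of points: `ξ^j = φ_{L,S}(n_j)` where `n_1 < n_2 < ⋯`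
is the increasing enumeration of `N_{L,S}` (so `n_j = Nat.nth (memNLS L S) (j-1)`). -/
def lsSeq (L S : ℕ) (γ : ℝ) (j : ℕ) : ℝ :=
  lsPhi L S γ (Nat.nth (memNLS L S) (j - 1))

/-- One-dimensional discrepancy of the first `N` terms `x 1, …, x N` of a sequence:
`sup_{0 ≤ a < b ≤ 1} |(1/N) Σ_{j=1}^N χ_{[a,b)}(x j) − (b−a)|`. -/
def discrep (x : ℕ → ℝ) (N : ℕ) : ℝ :=
  ⨆ p : {p : ℝ × ℝ // 0 ≤ p.1 ∧ p.1 < p.2 ∧ p.2 ≤ 1},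
    |(∑ j ∈ Finset.Icc 1 N,
        Set.indicator (Set.Ico p.1.1 p.1.2) (fun _ => (1 : ℝ)) (x j)) / N
      - (p.1.2 - p.1.1)|

/-- Two-dimensional (star) discrepancy of the first `N` terms of a sequence of points
in the unit square:
`sup_{0 < a ≤ 1, 0 < b ≤ 1} |(1/N) Σ_{j=1}^N χ_{[0,a)×[0,b)}(x j) − ab|`. -/
def discrep2 (x : ℕ → ℝ × ℝ) (N : ℕ) : ℝ :=
  ⨆ p : {p : ℝ × ℝ // 0 < p.1 ∧ p.1 ≤ 1 ∧ 0 < p.2 ∧ p.2 ≤ 1},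
    |(∑ j ∈ Finset.Icc 1 N,
        Set.indicator (Set.Ico (0 : ℝ) p.1.1) (fun _ => (1 : ℝ)) (x j).1 *
        Set.indicator (Set.Ico (0 : ℝ) p.1.2) (fun _ => (1 : ℝ)) (x j).2) / N
      - p.1.1 * p.1.2|

/-- Prepending a least significant digit shifts the other digits by one place. -/
lemma lsDigit_add_mul_succ {b a : ℕ} (ha : a < b) (n k : ℕ) :
    lsDigit b (a + b * n) (k + 1) = lsDigit b n k := by
  have hb : 0 < b := by omega
  unfold lsDigit
  rw [pow_succ', ← Nat.div_div_eq_div_mul, Nat.add_mul_div_left _ _ hb, Nat.div_eq_of_lt ha,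
    zero_add]

lemma lsDigit_add_mul_zero {b a : ℕ} (ha : a < b) (n : ℕ) : lsDigit b (a + b * n) 0 = a := by
  simp [lsDigit, Nat.mod_eq_of_lt ha]

lemma memNLS_add_mul {L S a : ℕ} (ha : a < L + S) (n : ℕ) :
    memNLS L S (a + (L + S) * n) ↔ (a < L ∨ n % (L + S) = 0) ∧ memNLS L S n := by
  have h0 : lsDigit (L + S) n 0 = n % (L + S) := by simp [lsDigit]
  have hlt := Nat.mod_lt n (show 0 < L + S by omega)
  constructor
  · intro h
    refine ⟨?_, fun k => ?_⟩
    · have := h 0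
      rw [lsDigit_add_mul_zero ha, lsDigit_add_mul_succ ha, h0] at this
      omega
    · have := h (k + 1)
      rwa [lsDigit_add_mul_succ ha, lsDigit_add_mul_succ ha] at this
  · rintro ⟨h, hn⟩ k
    cases k with
    | zero =>
      rw [lsDigit_add_mul_zero ha, lsDigit_add_mul_succ ha, h0]
      omega
    | succ k =>
      rw [lsDigit_add_mul_succ ha, lsDigit_add_mul_succ ha]
      exact hn k

lemma memNLS_zero (L S : ℕ) : memNLS L S 0 := by
  intro k
  simp [lsDigit]

lemma memNLS_infinite {L S : ℕ} (hL : 0 < L) (hS : 0 < S) :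
    (Set.ofPred (memNLS L S)).Infinite := by
  have hpow : ∀ k, memNLS L S ((L + S) ^ k) := by
    intro k
    induction k with
    | zero =>
      have := (memNLS_add_mul (L := L) (S := S) (a := 1) (by omega) 0).2
        ⟨Or.inr (by simp), memNLS_zero L S⟩
      simpa using this
    | succ k ih =>
      have := (memNLS_add_mul (L := L) (S := S) (a := 0) (by omega) _).2 ⟨Or.inl hL, ih⟩
      simpa [pow_succ'] using this
  exact Set.infinite_of_injective_forall_mem
    (Nat.pow_right_injective (show 2 ≤ L + S by omega)) hpow

lemma lsPhi_eq_sum_range {L S : ℕ} (hL : 0 < L) (hS : 0 < S) (γ : ℝ) {n K : ℕ}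
    (hK : Nat.log (L + S) n + 1 ≤ K) :
    lsPhi L S γ n = ∑ k ∈ range K, lsTilde L γ (lsDigit (L + S) n k) * γ ^ (k + 1) := by
  unfold lsPhi
  refine Finset.sum_subset (by simpa using hK) fun k _ hk => ?_
  have hk' : Nat.log (L + S) n < k := by simpa using hk
  have hd : lsDigit (L + S) n k = 0 := by
    unfold lsDigit
    rw [Nat.div_eq_of_lt (Nat.lt_pow_of_log_lt (by omega) hk'), Nat.zero_mod]
  simp [hd, lsTilde, hL]

lemma lsPhi_add_mul {L S : ℕ} (hL : 0 < L) (hS : 0 < S) (γ : ℝ) {a : ℕ} (ha : a < L + S)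
    (n : ℕ) :
    lsPhi L S γ (a + (L + S) * n) = lsTilde L γ a * γ + γ * lsPhi L S γ n := by
  set K := Nat.log (L + S) n + Nat.log (L + S) (a + (L + S) * n) + 1
  rw [lsPhi_eq_sum_range hL hS γ (n := n) (K := K) (by omega),
    lsPhi_eq_sum_range hL hS γ (n := a + (L + S) * n) (K := K + 1) (by omega),
    Finset.sum_range_succ', lsDigit_add_mul_zero ha, Finset.mul_sum, add_comm]
  congr 1
  · simp
  · refine Finset.sum_congr rfl fun k _ => ?_
    rw [lsDigit_add_mul_succ ha]
    ring

lemma lsPhi_add_mul_of_lt {L S : ℕ} (hL : 0 < L) (hS : 0 < S) (γ : ℝ) {a : ℕ} (ha : a < L)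
    (n : ℕ) : lsPhi L S γ (a + (L + S) * n) = γ * (a + lsPhi L S γ n) := by
  rw [lsPhi_add_mul hL hS γ (by omega), lsTilde, if_pos ha]
  ring

lemma lsPhi_add_mul_mul {L S : ℕ} (hL : 0 < L) (hS : 0 < S) (γ : ℝ) {s : ℕ} (hs : s < S)
    (n : ℕ) : lsPhi L S γ (L + s + (L + S) * ((L + S) * n)) =
      L * γ + γ ^ 2 * (s + lsPhi L S γ n) := by
  have h := lsPhi_add_mul_of_lt hL hS γ hL n
  simp only [Nat.cast_zero, zero_add] at h
  rw [lsPhi_add_mul hL hS γ (by omega), lsTilde, if_neg (by omega), h]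
  push_cast
  ring

lemma lsPhi_nonneg (L S : ℕ) {γ : ℝ} (hγ : 0 ≤ γ) (n : ℕ) : 0 ≤ lsPhi L S γ n := by
  refine Finset.sum_nonneg fun k _ => mul_nonneg ?_ (by positivity)
  unfold lsTilde
  split_ifs with h
  · positivity
  · have : (L : ℝ) ≤ (lsDigit (L + S) n k : ℝ) := by exact_mod_cast not_lt.1 h
    have := mul_nonneg hγ (sub_nonneg.2 this)
    positivity

lemma lsPhi_lt_one {L S : ℕ} (hL : 0 < L) (hS : 0 < S) {γ : ℝ} (hγ0 : 0 < γ)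
    (hroot : (L : ℝ) * γ + (S : ℝ) * γ ^ 2 = 1) {n : ℕ} (hn : memNLS L S n) :
    lsPhi L S γ n < 1 := by
  induction n using Nat.strong_induction_on with
  | _ n ih =>
  rcases Nat.eq_zero_or_pos n with rfl | hpos
  · simp [lsPhi, lsDigit, lsTilde, hL]
  have hb : 1 < L + S := by omega
  obtain ⟨a, m, ha, rfl⟩ : ∃ a m, a < L + S ∧ n = a + (L + S) * m :=
    ⟨n % (L + S), n / (L + S), Nat.mod_lt _ (by omega), (Nat.mod_add_div n (L + S)).symm⟩
  obtain ⟨hcond, hm⟩ := (memNLS_add_mul ha m).1 hn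
  have hlt : ∀ m, 0 < m → m < (L + S) * m := fun m hm => by nlinarith
  by_cases haL : a < L
  · have hφ : lsPhi L S γ m < 1 := by
      rcases Nat.eq_zero_or_pos m with rfl | hm0
      · simp [lsPhi, lsDigit, lsTilde, hL]
      · exact ih m (by have := hlt m hm0; omega) hm
    rw [lsPhi_add_mul_of_lt hL hS γ haL]
    have : (a : ℝ) + 1 ≤ L := by exact_mod_cast haL
    have hSγ : 0 < (S : ℝ) * γ ^ 2 := by positivity
    nlinarith
  · obtain ⟨q, rfl⟩ := Nat.dvd_of_mod_eq_zero (hcond.resolve_left haL)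
    obtain ⟨s, rfl⟩ := Nat.exists_eq_add_of_le (not_lt.1 haL)
    have hq : memNLS L S q := by
      have := (memNLS_add_mul (L := L) (S := S) (a := 0) (by omega) q).1 (by simpa using hm)
      exact this.2
    have hφ : lsPhi L S γ q < 1 := by
      rcases Nat.eq_zero_or_pos q with rfl | hq0
      · simp [lsPhi, lsDigit, lsTilde, hL]
      · refine ih q ?_ hq
        have h1 := hlt q hq0
        have h2 := hlt _ (hq0.trans h1)
        omega
    rw [lsPhi_add_mul_mul hL hS γ (by omega)]
    have : (s : ℝ) + 1 ≤ S := by exact_mod_cast (show s + 1 ≤ S by omega)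
    have hγ2 : 0 < γ ^ 2 := by positivity
    nlinarith

/-- Splitting a sum over an initial segment according to the residue modulo `b`. -/
lemma sum_range_eq_sum_residues {M : Type*} [AddCommMonoid M] {b : ℕ} (hb : 0 < b)
    (f : ℕ → M) (X : ℕ) :
    ∑ n ∈ range X, f n =
      ∑ a ∈ range b, ∑ m ∈ range ((X + (b - 1 - a)) / b), f (a + b * m) := by
  rw [Finset.sum_sigma']
  refine Finset.sum_nbij' (fun n => ⟨n % b, n / b⟩) (fun p => p.1 + b * p.2) ?_ ?_ ?_ ?_ ?_
  · intro n hn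
    have hn : n < X := by simpa using hn
    have h1 := Nat.mod_lt n hb
    have h2 := Nat.mod_add_div n b
    simp only [Finset.mem_sigma, Finset.mem_range]
    refine ⟨h1, ?_⟩
    rw [← Nat.succ_le_iff, Nat.le_div_iff_mul_le hb, Nat.succ_mul, Nat.mul_comm]
    omega
  · rintro ⟨a, m⟩ h
    simp only [Finset.mem_sigma, Finset.mem_range] at h ⊢
    obtain ⟨h1, h2⟩ := h
    rw [← Nat.succ_le_iff, Nat.le_div_iff_mul_le hb, Nat.succ_mul, Nat.mul_comm] at h2
    omega
  · intro n _
    exact Nat.mod_add_div n b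
  · rintro ⟨a, m⟩ h
    simp only [Finset.mem_sigma, Finset.mem_range] at h
    simp [Nat.mod_eq_of_lt h.1, Nat.add_mul_div_left _ _ hb, Nat.div_eq_of_lt h.1]
  · intro n _
    rw [Nat.mod_add_div]

/-- The number of `m` with `a + b * m < X` (for `a < b`). -/
def residueCount (b X a : ℕ) : ℕ := (X + (b - 1 - a)) / b

lemma div_le_residueCount (b X a : ℕ) : X / b ≤ residueCount b X a :=
  Nat.div_le_div_right (by omega)

lemma residueCount_le_div_add_one {b : ℕ} (hb : 0 < b) (X a : ℕ) :
    residueCount b X a ≤ X / b + 1 := by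
  rw [← Nat.add_div_right X hb]
  exact Nat.div_le_div_right (by omega)

lemma residueCount_le_pow {b X k : ℕ} (hb : 0 < b) (hX : X ≤ b ^ (k + 1)) (a : ℕ) :
    residueCount b X a ≤ b ^ k := by
  rw [residueCount, ← Nat.lt_succ_iff, Nat.div_lt_iff_lt_mul hb, Nat.succ_mul, ← pow_succ]
  omega

lemma div_div_le_residueCount (b X a : ℕ) :
    X / b / b ≤ residueCount b (residueCount b X a) 0 :=
  (Nat.div_le_div_right (div_le_residueCount b X a)).trans (div_le_residueCount b _ 0)

lemma residueCount_residueCount_le {b : ℕ} (hb : 0 < b) (X a : ℕ) :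
    residueCount b (residueCount b X a) 0 ≤ X / b / b + 1 := by
  rw [← Nat.add_div_right _ hb]
  refine Nat.div_le_div_right ?_
  have := residueCount_le_div_add_one hb X a
  omega

open Classical in
/-- The number of `n < X` in `N_{L,S}` with `φ_{L,S}(n) < β`. -/
def lsCount (L S : ℕ) (γ : ℝ) (X : ℕ) (β : ℝ) : ℝ :=
  ∑ n ∈ range X, if memNLS L S n ∧ lsPhi L S γ n < β then 1 else 0

/-- The number of `n < X` in `N_{L,S}`. -/
def lsTotal (L S : ℕ) (γ : ℝ) (X : ℕ) : ℝ := lsCount L S γ X 1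

section Count

variable {L S : ℕ} {γ : ℝ}

lemma lsCount_of_nonpos (hγ0 : 0 < γ) (X : ℕ) {β : ℝ} (hβ : β ≤ 0) :
    lsCount L S γ X β = 0 := by
  refine Finset.sum_eq_zero fun n _ => if_neg fun h => ?_
  have := lsPhi_nonneg L S hγ0.le n
  linarith [h.2]

lemma lsCount_of_one_le (hL : 0 < L) (hS : 0 < S) (hγ0 : 0 < γ)
    (hroot : (L : ℝ) * γ + (S : ℝ) * γ ^ 2 = 1) (X : ℕ) {β : ℝ} (hβ : 1 ≤ β) :
    lsCount L S γ X β = lsTotal L S γ X := by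
  classical
  refine Finset.sum_congr rfl fun n _ => if_congr ?_ rfl rfl
  exact and_congr_right fun h =>
    iff_of_true ((lsPhi_lt_one hL hS hγ0 hroot h).trans_le hβ) (lsPhi_lt_one hL hS hγ0 hroot h)

lemma lsCount_nonneg (X : ℕ) (β : ℝ) : 0 ≤ lsCount L S γ X β :=
  Finset.sum_nonneg fun n _ => by split_ifs <;> norm_num

lemma lsCount_le (X : ℕ) (β : ℝ) : lsCount L S γ X β ≤ X := by
  classical
  calc lsCount L S γ X β ≤ ∑ n ∈ range X, (1 : ℝ) :=
        Finset.sum_le_sum fun n _ => by split_ifs <;> norm_num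
    _ = X := by simp

lemma lsCount_mono {X Y : ℕ} (h : X ≤ Y) (β : ℝ) : lsCount L S γ X β ≤ lsCount L S γ Y β :=
  Finset.sum_le_sum_of_subset_of_nonneg (by simpa using h)
    fun n _ _ => by split_ifs <;> norm_num

lemma abs_lsTotal_sub_le {X Y : ℕ} (h1 : X ≤ Y) (h2 : Y ≤ X + 1) :
    |lsTotal L S γ Y - lsTotal L S γ X| ≤ 1 := by
  obtain rfl | rfl : Y = X ∨ Y = X + 1 := by omega
  · simp
  · unfold lsTotal lsCount
    rw [Finset.sum_range_succ, add_sub_cancel_left]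
    split_ifs <;> norm_num

/-- Self-similarity of the counting function. -/
lemma lsCount_eq (hL : 0 < L) (hS : 0 < S) (hγ0 : 0 < γ) (X : ℕ) (β : ℝ) :
    lsCount L S γ X β =
      ∑ a ∈ range L, lsCount L S γ (residueCount (L + S) X a) (β / γ - a) +
      ∑ s ∈ range S, lsCount L S γ
        (residueCount (L + S) (residueCount (L + S) X (L + s)) 0)
        ((β - L * γ) / γ ^ 2 - s) := by
  classical
  have hb : 0 < L + S := by omega
  rw [lsCount, sum_range_eq_sum_residues hb, Finset.sum_range_add]
  congr 1
  · refine Finset.sum_congr rfl fun a ha => Finset.sum_congr rfl fun n _ => if_congr ?_ rfl rfl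
    have ha : a < L := by simpa using ha
    rw [memNLS_add_mul (by omega), lsPhi_add_mul_of_lt hL hS γ ha, lt_sub_iff_add_lt,
      lt_div_iff₀ hγ0]
    have : (lsPhi L S γ n + a) * γ = γ * (a + lsPhi L S γ n) := by ring
    rw [this]
    simp [ha]
  · refine Finset.sum_congr rfl fun s hs => ?_
    have hs : s < S := by simpa using hs
    rw [sum_range_eq_sum_residues hb, Finset.sum_eq_single_of_mem 0 (by simpa using hb)]
    · refine Finset.sum_congr rfl fun n _ => if_congr ?_ rfl rfl
      have h0 := memNLS_add_mul (L := L) (S := S) (a := 0) hb n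
      rw [zero_add] at h0 ⊢
      rw [memNLS_add_mul (by omega), lsPhi_add_mul_mul hL hS γ hs, lt_sub_iff_add_lt,
        lt_div_iff₀ (by positivity), h0, lt_sub_iff_add_lt']
      have : (lsPhi L S γ n + s) * γ ^ 2 = γ ^ 2 * (s + lsPhi L S γ n) := by ring
      rw [this]
      simp [hL]
    · intro c hc hc0
      have hc : c < L + S := by simpa using hc
      refine Finset.sum_eq_zero fun n _ => if_neg fun h => ?_
      have := ((memNLS_add_mul (by omega) _).1 h.1).1
      rw [Nat.add_mul_mod_self_left, Nat.mod_eq_of_lt hc] at this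
      omega

lemma lsTotal_eq (hL : 0 < L) (hS : 0 < S) (hγ0 : 0 < γ)
    (hroot : (L : ℝ) * γ + (S : ℝ) * γ ^ 2 = 1) (X : ℕ) :
    lsTotal L S γ X = ∑ a ∈ range L, lsTotal L S γ (residueCount (L + S) X a) +
      ∑ s ∈ range S, lsTotal L S γ
        (residueCount (L + S) (residueCount (L + S) X (L + s)) 0) := by
  rw [lsTotal, lsCount_eq hL hS hγ0]
  congr 1
  · refine Finset.sum_congr rfl fun a ha => lsCount_of_one_le hL hS hγ0 hroot _ ?_
    have ha : (a : ℝ) + 1 ≤ L := by exact_mod_cast Finset.mem_range.1 ha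
    rw [le_sub_iff_add_le, le_div_iff₀ hγ0]
    have : 0 < (S : ℝ) * γ ^ 2 := by positivity
    nlinarith
  · refine Finset.sum_congr rfl fun s hs => lsCount_of_one_le hL hS hγ0 hroot _ ?_
    have hs : (s : ℝ) + 1 ≤ S := by exact_mod_cast Finset.mem_range.1 hs
    have h : (1 - L * γ) / γ ^ 2 = (S : ℝ) := by
      rw [div_eq_iff (by positivity)]; linarith
    rw [h]
    linarith

lemma abs_lsTotal_sub_div_le (hL : 0 < L) (hS : 0 < S) (hγ0 : 0 < γ)
    (hroot : (L : ℝ) * γ + (S : ℝ) * γ ^ 2 = 1) (X : ℕ) :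
    |lsTotal L S γ X - (L * lsTotal L S γ (X / (L + S)) +
      S * lsTotal L S γ (X / (L + S) / (L + S)))| ≤ L + S := by
  have hb : 0 < L + S := by omega
  have h : lsTotal L S γ X - (L * lsTotal L S γ (X / (L + S)) +
      S * lsTotal L S γ (X / (L + S) / (L + S))) =
      ∑ a ∈ range L, (lsTotal L S γ (residueCount (L + S) X a) - lsTotal L S γ (X / (L + S))) +
      ∑ s ∈ range S, (lsTotal L S γ (residueCount (L + S) (residueCount (L + S) X (L + s)) 0) -
        lsTotal L S γ (X / (L + S) / (L + S))) := by
    rw [lsTotal_eq hL hS hγ0 hroot X]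
    simp only [Finset.sum_sub_distrib, Finset.sum_const, Finset.card_range, nsmul_eq_mul]
    ring
  rw [h]
  refine (abs_add_le _ _).trans (add_le_add ?_ ?_)
  · refine (Finset.abs_sum_le_sum_abs _ _).trans ((Finset.sum_le_sum fun a _ =>
      abs_lsTotal_sub_le (div_le_residueCount _ _ _) (residueCount_le_div_add_one hb _ _)).trans ?_)
    simp
  · refine (Finset.abs_sum_le_sum_abs _ _).trans ((Finset.sum_le_sum fun a _ =>
      abs_lsTotal_sub_le (div_div_le_residueCount _ _ _)
        (residueCount_residueCount_le hb _ _)).trans ?_)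
    simp

lemma one_le_lsTotal (hL : 0 < L) {X : ℕ} (hX : 0 < X) : 1 ≤ lsTotal L S γ X := by
  classical
  refine le_trans ?_ (lsCount_mono (show 1 ≤ X from hX) 1)
  simp [lsCount, memNLS_zero, lsPhi, lsDigit, lsTilde, hL]

/-- `lsTotal` grows at least like `γ⁻¹ ^ k` at `X = (L + S) ^ k`. -/
lemma inv_pow_le_lsTotal (hL : 0 < L) (hS : 0 < S) (hγ0 : 0 < γ) (hγ1 : γ < 1)
    (hroot : (L : ℝ) * γ + (S : ℝ) * γ ^ 2 = 1) (k X : ℕ) (hX : (L + S) ^ k ≤ X) :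
    γ⁻¹ ^ k ≤ γ⁻¹ * lsTotal L S γ X := by
  have hb : 0 < L + S := by omega
  have hinv : 1 < γ⁻¹ := (one_lt_inv₀ hγ0).2 hγ1
  have hone := one_le_lsTotal (S := S) (γ := γ) hL (lt_of_lt_of_le (pow_pos hb k) hX)
  induction k using Nat.twoStepInduction generalizing X with
  | zero => nlinarith
  | one => nlinarith
  | more k ih1 ih2 =>
    have hX1 : (L + S) ^ (k + 1) ≤ X / (L + S) := by
      rw [Nat.le_div_iff_mul_le hb, ← pow_succ]; exact hX
    have hX2 : (L + S) ^ k ≤ X / (L + S) / (L + S) := by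
      rw [Nat.le_div_iff_mul_le hb, ← pow_succ]; exact hX1
    have h1 := ih2 _ hX1 (one_le_lsTotal hL (lt_of_lt_of_le (pow_pos hb _) hX1))
    have h2 := ih1 _ hX2 (one_le_lsTotal hL (lt_of_lt_of_le (pow_pos hb _) hX2))
    have h3 : (L : ℝ) * lsTotal L S γ (X / (L + S)) +
        S * lsTotal L S γ (X / (L + S) / (L + S)) ≤ lsTotal L S γ X := by
      rw [lsTotal_eq hL hS hγ0 hroot X]
      have e1 : (L : ℝ) * lsTotal L S γ (X / (L + S)) =
          ∑ a ∈ range L, lsTotal L S γ (X / (L + S)) := by simp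
      have e2 : (S : ℝ) * lsTotal L S γ (X / (L + S) / (L + S)) =
          ∑ s ∈ range S, lsTotal L S γ (X / (L + S) / (L + S)) := by simp
      rw [e1, e2]
      exact add_le_add
        (Finset.sum_le_sum fun a _ => lsCount_mono (div_le_residueCount _ _ _) 1)
        (Finset.sum_le_sum fun a _ => lsCount_mono (div_div_le_residueCount _ _ _) 1)
    have hsq : γ⁻¹ ^ 2 = L * γ⁻¹ + S := by
      field_simp
      linarith
    calc γ⁻¹ ^ (k + 2) = L * γ⁻¹ ^ (k + 1) + S * γ⁻¹ ^ k := by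
          rw [pow_add, hsq]; ring
      _ ≤ L * (γ⁻¹ * lsTotal L S γ (X / (L + S))) +
          S * (γ⁻¹ * lsTotal L S γ (X / (L + S) / (L + S))) := by gcongr
      _ = γ⁻¹ * (L * lsTotal L S γ (X / (L + S)) +
          S * lsTotal L S γ (X / (L + S) / (L + S))) := by ring
      _ ≤ γ⁻¹ * lsTotal L S γ X := by gcongr

/-- The defect of `lsTotal` from exact scaling under division by `L + S`. -/
def lsDefect (L S : ℕ) (γ : ℝ) (X : ℕ) : ℝ :=
  lsTotal L S γ (X / (L + S)) - γ * lsTotal L S γ X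

lemma abs_lsDefect_le_succ (hL : 0 < L) (hS : 0 < S) (hγ0 : 0 < γ) (hγ1 : γ < 1)
    (hroot : (L : ℝ) * γ + (S : ℝ) * γ ^ 2 = 1) (X : ℕ) :
    |lsDefect L S γ X| ≤ S * γ * |lsDefect L S γ (X / (L + S))| + (L + S) := by
  have h := abs_lsTotal_sub_div_le hL hS hγ0 hroot X
  set T := lsTotal L S γ X
  set U := lsTotal L S γ (X / (L + S))
  set V := lsTotal L S γ (X / (L + S) / (L + S))
  have e : lsDefect L S γ X =
      -(S * γ * lsDefect L S γ (X / (L + S))) - γ * (T - (L * U + S * V)) := by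
    simp only [lsDefect]
    linear_combination -U * hroot
  have hSγ : (0 : ℝ) ≤ S * γ := by positivity
  rw [e]
  refine (abs_sub _ _).trans ?_
  rw [abs_neg, abs_mul, abs_mul γ, abs_of_nonneg hSγ, abs_of_pos hγ0]
  have := abs_nonneg (T - (L * U + S * V))
  nlinarith

lemma exists_abs_lsDefect_le (hL : 0 < L) (hS : 0 < S) (hγ0 : 0 < γ) (hγ1 : γ < 1)
    (hroot : (L : ℝ) * γ + (S : ℝ) * γ ^ 2 = 1) (hρ : 1 < (S : ℝ) * γ) :
    ∃ D : ℝ, 0 < D ∧ ∀ k X : ℕ, X ≤ (L + S) ^ k → |lsDefect L S γ X| ≤ D * (S * γ) ^ k := by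
  have hb : 1 < L + S := by omega
  set ρ := (S : ℝ) * γ
  have hρ' : 0 < ρ - 1 := by linarith
  set F : ℝ := (L + S) / (ρ - 1)
  have hF0 : 0 ≤ F := by positivity
  have hFm : F * (ρ - 1) = L + S := div_mul_cancel₀ _ hρ'.ne'
  have key : ∀ k X : ℕ, X ≤ (L + S) ^ k → |lsDefect L S γ X| ≤ (1 + F) * ρ ^ k - F := by
    intro k
    induction k with
    | zero =>
      intro X hX
      have hX : X ≤ 1 := by simpa using hX
      have hd : X / (L + S) = 0 := Nat.div_eq_of_lt (by omega)
      have h0 : lsTotal L S γ 0 = 0 := by simp [lsTotal, lsCount]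
      have h1 : 0 ≤ lsTotal L S γ X := lsCount_nonneg X 1
      have h2 : lsTotal L S γ X ≤ X := lsCount_le X 1
      have h3 : (X : ℝ) ≤ 1 := by exact_mod_cast hX
      rw [lsDefect, hd, h0, zero_sub, abs_neg, abs_of_nonneg (by positivity)]
      nlinarith
    | succ k ih =>
      intro X hX
      have h1 := ih (X / (L + S)) (Nat.div_le_of_le_mul (by rwa [← pow_succ']))
      refine (abs_lsDefect_le_succ hL hS hγ0 hγ1 hroot X).trans ?_
      have h2 := mul_le_mul_of_nonneg_left h1 (show 0 ≤ ρ by linarith)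
      rw [pow_succ]
      linarith
  exact ⟨1 + F, by positivity, fun k X hX => (key k X hX).trans (by linarith)⟩

/-- The projection of `t` to the interval `[0, 1]`. -/
def clampUnit (t : ℝ) : ℝ := max 0 (min 1 t)

lemma clampUnit_nonneg (t : ℝ) : 0 ≤ clampUnit t := le_max_left _ _

lemma clampUnit_le_one (t : ℝ) : clampUnit t ≤ 1 := max_le zero_le_one (min_le_left _ _)

lemma clampUnit_of_nonpos {t : ℝ} (ht : t ≤ 0) : clampUnit t = 0 := by
  rw [clampUnit, min_eq_right (by linarith), max_eq_left ht]

lemma clampUnit_of_one_le {t : ℝ} (ht : 1 ≤ t) : clampUnit t = 1 := by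
  rw [clampUnit, min_eq_left ht, max_eq_right zero_le_one]

lemma clampUnit_of_mem {t : ℝ} (h0 : 0 ≤ t) (h1 : t ≤ 1) : clampUnit t = t := by
  rw [clampUnit, min_eq_right h1, max_eq_right h0]

lemma sum_clampUnit_sub (m : ℕ) (t : ℝ) :
    ∑ i ∈ range m, clampUnit (t - i) = max 0 (min (m : ℝ) t) := by
  induction m with
  | zero => simp
  | succ m ih =>
    have hm : (0 : ℝ) ≤ m := m.cast_nonneg
    rw [Finset.sum_range_succ, ih, Nat.cast_succ]
    rcases le_total t m with h | h
    · rw [clampUnit_of_nonpos (by linarith), min_eq_right h, min_eq_right (by linarith), add_zero]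
    rw [min_eq_left h, max_eq_right hm]
    rcases le_total (m + 1 : ℝ) t with h' | h'
    · rw [clampUnit_of_one_le (by linarith), min_eq_left h', max_eq_right (by linarith)]
    · rw [clampUnit_of_mem (by linarith) (by linarith), min_eq_right h',
        max_eq_right (by linarith)]
      ring

lemma clampUnit_eq_sum (hγ0 : 0 < γ) (hroot : (L : ℝ) * γ + (S : ℝ) * γ ^ 2 = 1) (β : ℝ) :
    clampUnit β = γ * ∑ a ∈ range L, clampUnit (β / γ - a) +
      γ ^ 2 * ∑ s ∈ range S, clampUnit ((β - L * γ) / γ ^ 2 - s) := by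
  have hL : (0 : ℝ) ≤ L * γ := by positivity
  have hS : (0 : ℝ) ≤ S * γ ^ 2 := by positivity
  rw [sum_clampUnit_sub, sum_clampUnit_sub, mul_max_of_nonneg _ _ hγ0.le,
    mul_min_of_nonneg _ _ hγ0.le, mul_max_of_nonneg _ _ (sq_nonneg γ),
    mul_min_of_nonneg _ _ (sq_nonneg γ), mul_div_cancel₀ _ hγ0.ne',
    mul_div_cancel₀ _ (pow_ne_zero 2 hγ0.ne'), clampUnit, mul_zero, mul_zero,
    mul_comm γ, mul_comm (γ ^ 2)]
  rcases le_total β (L * γ) with h | h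
  · rw [min_eq_right h, min_eq_right (by linarith : β ≤ 1),
      max_eq_left ((min_le_right _ _).trans (by linarith : β - L * γ ≤ 0)), add_zero]
  · rw [min_eq_left h, max_eq_right hL]
    rcases le_total β 1 with h1 | h1
    · rw [min_eq_right h1, min_eq_right (by linarith), max_eq_right (by linarith),
        max_eq_right (by linarith)]
      ring
    · rw [min_eq_left h1, min_eq_left (by linarith), max_eq_right zero_le_one, max_eq_right hS]
      linarith

/-- The local discrepancy of the points with index `n < X` in `[0, β)`. -/
def lsDisc (L S : ℕ) (γ : ℝ) (X : ℕ) (β : ℝ) : ℝ :=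
  lsCount L S γ X β - clampUnit β * lsTotal L S γ X

lemma lsDisc_of_nonpos (hγ0 : 0 < γ) (X : ℕ) {β : ℝ} (hβ : β ≤ 0) : lsDisc L S γ X β = 0 := by
  rw [lsDisc, lsCount_of_nonpos hγ0 X hβ, clampUnit_of_nonpos hβ]
  ring

lemma lsDisc_of_one_le (hL : 0 < L) (hS : 0 < S) (hγ0 : 0 < γ)
    (hroot : (L : ℝ) * γ + (S : ℝ) * γ ^ 2 = 1) (X : ℕ) {β : ℝ} (hβ : 1 ≤ β) :
    lsDisc L S γ X β = 0 := by
  rw [lsDisc, lsCount_of_one_le hL hS hγ0 hroot X hβ, clampUnit_of_one_le hβ]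
  ring

lemma abs_lsDisc_le (X : ℕ) (β : ℝ) : |lsDisc L S γ X β| ≤ X := by
  have h1 := lsCount_nonneg (L := L) (S := S) (γ := γ) X β
  have h2 := lsCount_le (L := L) (S := S) (γ := γ) X β
  have h3 : 0 ≤ lsTotal L S γ X := lsCount_nonneg X 1
  have h4 : lsTotal L S γ X ≤ X := lsCount_le X 1
  have h5 := mul_nonneg (clampUnit_nonneg β) h3
  have h6 := mul_le_of_le_one_left h3 (clampUnit_le_one β)
  rw [lsDisc, abs_le]
  constructor <;> linarith

/-- Self-similarity of the local discrepancy. -/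
lemma lsDisc_eq (hL : 0 < L) (hS : 0 < S) (hγ0 : 0 < γ)
    (hroot : (L : ℝ) * γ + (S : ℝ) * γ ^ 2 = 1) (X : ℕ) (β : ℝ) :
    lsDisc L S γ X β =
      (∑ a ∈ range L, lsDisc L S γ (residueCount (L + S) X a) (β / γ - a) +
      ∑ s ∈ range S, lsDisc L S γ
        (residueCount (L + S) (residueCount (L + S) X (L + s)) 0)
        ((β - L * γ) / γ ^ 2 - s)) +
      (∑ a ∈ range L, clampUnit (β / γ - a) *
        (lsTotal L S γ (residueCount (L + S) X a) - γ * lsTotal L S γ X) +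
      ∑ s ∈ range S, clampUnit ((β - L * γ) / γ ^ 2 - s) *
        (lsTotal L S γ (residueCount (L + S) (residueCount (L + S) X (L + s)) 0) -
          γ ^ 2 * lsTotal L S γ X)) := by
  rw [lsDisc, lsCount_eq hL hS hγ0, clampUnit_eq_sum hγ0 hroot β]
  simp only [lsDisc, mul_sub, Finset.sum_sub_distrib, ← Finset.sum_mul]
  ring

/-- A sum of terms supported where `t - i ∈ (0, 1)` has at most one nonzero term. -/
lemma abs_sum_range_le_of_support {m : ℕ} {g : ℕ → ℝ} {t B : ℝ} (hB : 0 ≤ B)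
    (hg : ∀ i < m, |g i| ≤ B) (h0 : ∀ i : ℕ, t - i ≤ 0 → g i = 0)
    (h1 : ∀ i : ℕ, 1 ≤ t - i → g i = 0) : |∑ i ∈ range m, g i| ≤ B := by
  have hz : ∀ i : ℕ, i ≠ ⌊t⌋₊ → g i = 0 := by
    intro i hi
    rcases lt_or_gt_of_ne hi with h | h
    · refine h1 i ?_
      have : ((i + 1 : ℕ) : ℝ) ≤ t := (Nat.le_floor_iff' (Nat.succ_ne_zero i)).1 h
      push_cast at this
      linarith
    · exact h0 i (by linarith [(Nat.floor_lt' (by omega : i ≠ 0)).1 h])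
  by_cases hm : ⌊t⌋₊ < m
  · rw [Finset.sum_eq_single_of_mem _ (Finset.mem_range.2 hm) fun i _ hi => hz i hi]
    exact hg _ hm
  · rw [Finset.sum_eq_zero fun i hi => hz i (by have := Finset.mem_range.1 hi; omega)]
    simpa using hB

lemma abs_sum_range_mul_le {m : ℕ} {c g : ℕ → ℝ} {B : ℝ} (hc0 : ∀ i, 0 ≤ c i)
    (hc1 : ∀ i, c i ≤ 1) (hg : ∀ i, |g i| ≤ B) : |∑ i ∈ range m, c i * g i| ≤ m * B := by
  refine (Finset.abs_sum_le_sum_abs _ _).trans ((Finset.sum_le_sum fun i _ => ?_).trans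
    (by simp : ∑ i ∈ range m, B ≤ m * B))
  rw [abs_mul, abs_of_nonneg (hc0 i)]
  exact (mul_le_of_le_one_left (abs_nonneg _) (hc1 i)).trans (hg i)

lemma exists_abs_lsDisc_le (hL : 0 < L) (hS : 0 < S) (hγ0 : 0 < γ) (hγ1 : γ < 1)
    (hroot : (L : ℝ) * γ + (S : ℝ) * γ ^ 2 = 1) (hρ : 1 < (S : ℝ) * γ) :
    ∃ H : ℝ, 0 < H ∧ ∀ k X : ℕ, X ≤ (L + S) ^ k → ∀ β : ℝ,
      |lsDisc L S γ X β| ≤ H * (S * γ) ^ k := by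
  obtain ⟨D, hD0, hD⟩ := exists_abs_lsDefect_le hL hS hγ0 hγ1 hroot hρ
  have hb : 0 < L + S := by omega
  set ρ := (S : ℝ) * γ
  have hρ' : 0 < ρ - 1 := by linarith
  set G : ℝ := L * (D + 1) + S * (2 * D + 1) with hG
  have hG0 : 0 ≤ G := by positivity
  set H : ℝ := G * ρ / (ρ - 1) + (L + S) with hH
  have hLS : (1 : ℝ) ≤ L + S := by exact_mod_cast hb
  have hq : 0 ≤ G * ρ / (ρ - 1) := by positivity
  have hH1 : (1 : ℝ) ≤ H := by linarith
  have hHG : G * ρ ≤ H * (ρ - 1) := by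
    have h : G * ρ / (ρ - 1) * (ρ - 1) = G * ρ := div_mul_cancel₀ _ hρ'.ne'
    nlinarith
  refine ⟨H, by linarith, fun k => ?_⟩
  induction k using Nat.twoStepInduction with
  | zero =>
    intro X hX β
    have hX : (X : ℝ) ≤ 1 := by exact_mod_cast (by simpa using hX : X ≤ 1)
    simpa using ((abs_lsDisc_le X β).trans hX).trans hH1
  | one =>
    intro X hX β
    have hX : (X : ℝ) ≤ L + S := by exact_mod_cast (by simpa using hX : X ≤ L + S)
    refine ((abs_lsDisc_le X β).trans hX).trans ?_
    rw [pow_one]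
    nlinarith
  | more k ih1 ih2 =>
    intro X hX β
    have hpk : (1 : ℝ) ≤ ρ ^ (k + 2) := one_le_pow₀ hρ.le
    have hE1 := hD (k + 2) X hX
    have hE2 : |lsDefect L S γ (X / (L + S))| ≤ D * ρ ^ (k + 2) :=
      (hD (k + 1) (X / (L + S)) (Nat.div_le_of_le_mul (by rwa [← pow_succ']))).trans
        (mul_le_mul_of_nonneg_left (pow_le_pow_right₀ hρ.le (by omega)) hD0.le)
    have hmono : H * ρ ^ k ≤ H * ρ ^ (k + 1) :=
      mul_le_mul_of_nonneg_left (pow_le_pow_right₀ hρ.le (by omega)) (by linarith)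
    have hBnn : 0 ≤ H * ρ ^ (k + 1) := by positivity
    have hlong : ∀ a, |lsTotal L S γ (residueCount (L + S) X a) - γ * lsTotal L S γ X| ≤
        (D + 1) * ρ ^ (k + 2) := by
      intro a
      have h := abs_lsTotal_sub_le (L := L) (S := S) (γ := γ)
        (div_le_residueCount (L + S) X a) (residueCount_le_div_add_one hb X a)
      have e : lsTotal L S γ (residueCount (L + S) X a) - γ * lsTotal L S γ X =
          (lsTotal L S γ (residueCount (L + S) X a) - lsTotal L S γ (X / (L + S))) +
            lsDefect L S γ X := by
        rw [lsDefect]; ring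
      rw [e]
      refine (abs_add_le _ _).trans ?_
      linarith
    have hshort : ∀ s, |lsTotal L S γ
        (residueCount (L + S) (residueCount (L + S) X (L + s)) 0) - γ ^ 2 * lsTotal L S γ X| ≤
        (2 * D + 1) * ρ ^ (k + 2) := by
      intro s
      have h := abs_lsTotal_sub_le (L := L) (S := S) (γ := γ)
        (div_div_le_residueCount (L + S) X (L + s)) (residueCount_residueCount_le hb X (L + s))
      have e : lsTotal L S γ (residueCount (L + S) (residueCount (L + S) X (L + s)) 0) -
          γ ^ 2 * lsTotal L S γ X =
          (lsTotal L S γ (residueCount (L + S) (residueCount (L + S) X (L + s)) 0) -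
            lsTotal L S γ (X / (L + S) / (L + S))) +
            lsDefect L S γ (X / (L + S)) + γ * lsDefect L S γ X := by
        rw [lsDefect, lsDefect]; ring
      rw [e]
      refine (abs_add_three _ _ _).trans ?_
      rw [abs_mul, abs_of_pos hγ0]
      have := mul_le_of_le_one_left (abs_nonneg (lsDefect L S γ X)) hγ1.le
      linarith
    have herr : |∑ a ∈ range L, clampUnit (β / γ - a) *
          (lsTotal L S γ (residueCount (L + S) X a) - γ * lsTotal L S γ X) +
        ∑ s ∈ range S, clampUnit ((β - L * γ) / γ ^ 2 - s) *
          (lsTotal L S γ (residueCount (L + S) (residueCount (L + S) X (L + s)) 0) -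
            γ ^ 2 * lsTotal L S γ X)| ≤ G * ρ ^ (k + 2) := by
      refine (abs_add_le _ _).trans ((add_le_add
        (abs_sum_range_mul_le (fun _ => clampUnit_nonneg _) (fun _ => clampUnit_le_one _) hlong)
        (abs_sum_range_mul_le (fun _ => clampUnit_nonneg _) (fun _ => clampUnit_le_one _)
          hshort)).trans (le_of_eq ?_))
      rw [hG]; ring
    have hmain : |∑ a ∈ range L, lsDisc L S γ (residueCount (L + S) X a) (β / γ - a) +
        ∑ s ∈ range S, lsDisc L S γ
          (residueCount (L + S) (residueCount (L + S) X (L + s)) 0)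
          ((β - L * γ) / γ ^ 2 - s)| ≤ H * ρ ^ (k + 1) := by
      rcases le_total β (L * γ) with h | h
      · rw [Finset.sum_eq_zero (s := range S) fun s _ => lsDisc_of_nonpos hγ0 _ ?_, add_zero]
        · exact abs_sum_range_le_of_support (t := β / γ) hBnn
            (fun a _ => ih2 _ (residueCount_le_pow hb hX a) _)
            (fun a ha => lsDisc_of_nonpos hγ0 _ ha)
            (fun a ha => lsDisc_of_one_le hL hS hγ0 hroot _ ha)
        · have : (β - L * γ) / γ ^ 2 ≤ 0 :=
            div_nonpos_of_nonpos_of_nonneg (by linarith) (by positivity)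
          have := s.cast_nonneg (α := ℝ)
          linarith
      · rw [Finset.sum_eq_zero (s := range L) fun a ha =>
          lsDisc_of_one_le hL hS hγ0 hroot _ ?_, zero_add]
        · exact abs_sum_range_le_of_support (t := (β - L * γ) / γ ^ 2) hBnn
            (fun s _ => (ih1 _ (residueCount_le_pow hb (residueCount_le_pow hb hX _) _) _).trans
              hmono)
            (fun a ha => lsDisc_of_nonpos hγ0 _ ha)
            (fun a ha => lsDisc_of_one_le hL hS hγ0 hroot _ ha)
        · have h1 : (L : ℝ) ≤ β / γ := (le_div_iff₀ hγ0).2 h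
          have h2 : (a : ℝ) + 1 ≤ L := by exact_mod_cast Finset.mem_range.1 ha
          linarith
    rw [lsDisc_eq hL hS hγ0 hroot]
    refine (abs_add_le _ _).trans ((add_le_add hmain herr).trans ?_)
    have hp : 0 ≤ ρ ^ (k + 1) := by positivity
    have := mul_le_mul_of_nonneg_right hHG hp
    rw [pow_succ ρ (k + 1)]
    linarith

open Classical in
lemma lsCount_nth (hL : 0 < L) (hS : 0 < S) (K : ℕ) (β : ℝ) :
    lsCount L S γ (Nat.nth (memNLS L S) K) β =
      ∑ i ∈ range K, if lsPhi L S γ (Nat.nth (memNLS L S) i) < β then 1 else 0 := by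
  have hinf := memNLS_infinite hL hS
  have hfilter : ∀ X, lsCount L S γ X β =
      ∑ n ∈ (range X).filter (memNLS L S), if lsPhi L S γ n < β then 1 else 0 := by
    intro X
    simp only [lsCount, ite_and, Finset.sum_filter]
  rw [hfilter]
  induction K with
  | zero => simp [Nat.nth_zero_of_zero (memNLS_zero L S)]
  | succ K ih =>
    rw [Nat.filter_range_nth_eq_insert_of_infinite hinf, Finset.sum_insert (by simp), ih,
      Finset.sum_range_succ, add_comm]

lemma lsTotal_nth (hL : 0 < L) (hS : 0 < S) (hγ0 : 0 < γ)
    (hroot : (L : ℝ) * γ + (S : ℝ) * γ ^ 2 = 1) (K : ℕ) :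
    lsTotal L S γ (Nat.nth (memNLS L S) K) = K := by
  rw [lsTotal, lsCount_nth hL hS, Finset.sum_congr rfl fun i _ => if_pos
    (lsPhi_lt_one hL hS hγ0 hroot (Nat.nth_mem_of_infinite (memNLS_infinite hL hS) i))]
  simp

lemma one_lt_mul_of_root (hSL : L + 2 ≤ S) (hγ0 : 0 < γ)
    (hroot : (L : ℝ) * γ + (S : ℝ) * γ ^ 2 = 1) : 1 < (S : ℝ) * γ := by
  by_contra! h
  have : (L : ℝ) + 2 ≤ S := by exact_mod_cast hSL
  nlinarith

/-- One-dimensional discrepancy estimate: the first `K` points of the `(L,S)`-sequence have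
local discrepancy `O(K ^ (1 - τ))`. -/
lemma exists_abs_sum_nth_sub_le (hL : 0 < L) (hS : 0 < S) (hγ0 : 0 < γ) (hγ1 : γ < 1)
    (hroot : (L : ℝ) * γ + (S : ℝ) * γ ^ 2 = 1) (hρ : 1 < (S : ℝ) * γ) :
    ∃ C : ℝ, 0 < C ∧ ∀ K : ℕ, 0 < K → ∀ β : ℝ, 0 ≤ β → β ≤ 1 →
      |lsCount L S γ (Nat.nth (memNLS L S) K) β - β * K| ≤
        C * (K : ℝ) ^ (-Real.log (S * γ) / Real.log γ) := by
  obtain ⟨H, hH0, hH⟩ := exists_abs_lsDisc_le hL hS hγ0 hγ1 hroot hρ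
  set ρ := (S : ℝ) * γ
  set e := -Real.log ρ / Real.log γ with he
  have hρ0 : 0 < ρ := by linarith
  have hlog : Real.log γ < 0 := Real.log_neg hγ0 hγ1
  have he0 : 0 ≤ e := div_nonneg_of_nonpos (by linarith [Real.log_pos hρ]) hlog.le
  have hinv : (γ⁻¹) ^ e = ρ := by
    rw [Real.rpow_def_of_pos (inv_pos.2 hγ0), Real.log_inv, he,
      show -Real.log γ * (-Real.log ρ / Real.log γ) = Real.log ρ by field_simp [hlog.ne],
      Real.exp_log hρ0]
  refine ⟨H * ρ ^ 2, by positivity, fun K hK β hβ0 hβ1 => ?_⟩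
  set X := Nat.nth (memNLS L S) K
  have hX : 0 < X := lt_of_le_of_lt (Nat.zero_le _)
    (Nat.nth_strictMono (memNLS_infinite hL hS) hK)
  have htot : lsTotal L S γ X = K := lsTotal_nth hL hS hγ0 hroot K
  set k := Nat.log (L + S) X
  have hdisc := hH (k + 1) X (Nat.lt_pow_succ_log_self (by omega) X).le β
  rw [lsDisc, clampUnit_of_mem hβ0 hβ1, htot] at hdisc
  have hgrow := inv_pow_le_lsTotal hL hS hγ0 hγ1 hroot k X
    (Nat.pow_log_le_self (L + S) hX.ne')
  rw [htot] at hgrow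
  have hpow : ρ ^ k ≤ ρ * (K : ℝ) ^ e := by
    calc ρ ^ k = (γ⁻¹ ^ k) ^ e := by
          rw [← hinv, ← Real.rpow_natCast, ← Real.rpow_natCast, ← Real.rpow_mul (by positivity),
            ← Real.rpow_mul (by positivity), mul_comm]
      _ ≤ (γ⁻¹ * K) ^ e := Real.rpow_le_rpow (by positivity) hgrow he0
      _ = ρ * (K : ℝ) ^ e := by rw [Real.mul_rpow (by positivity) (by positivity), hinv]
  calc _ ≤ H * ρ ^ (k + 1) := hdisc
    _ = H * ρ * ρ ^ k := by ring
    _ ≤ H * ρ * (ρ * (K : ℝ) ^ e) := by gcongr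
    _ = H * ρ ^ 2 * (K : ℝ) ^ e := by ring

/-- The points `((n - 1) / N, ξⁿ)` in the box `[0, a) × [0, β)` are the first `⌈a N⌉` points of
the sequence that lie in `[0, β)`. -/
lemma sum_indicator_box_eq (hL : 0 < L) (hS : 0 < S) (hγ0 : 0 < γ) {N : ℕ} (hN : 0 < N)
    {a : ℝ} (ha1 : a ≤ 1) (β : ℝ) :
    ∑ j ∈ Finset.Icc 1 N,
      Set.indicator (Set.Ico (0 : ℝ) a) (fun _ => (1 : ℝ)) (((j : ℝ) - 1) / N) *
        Set.indicator (Set.Ico (0 : ℝ) β) (fun _ => (1 : ℝ)) (lsSeq L S γ j) =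
      lsCount L S γ (Nat.nth (memNLS L S) ⌈a * N⌉₊) β := by
  classical
  have hN' : (0 : ℝ) < N := by exact_mod_cast hN
  have hKN : ⌈a * N⌉₊ ≤ N := Nat.ceil_le.2 (by nlinarith)
  have hrange : ∑ j ∈ Finset.Icc 1 N,
      Set.indicator (Set.Ico (0 : ℝ) a) (fun _ => (1 : ℝ)) (((j : ℝ) - 1) / N) *
        Set.indicator (Set.Ico (0 : ℝ) β) (fun _ => (1 : ℝ)) (lsSeq L S γ j) =
      ∑ i ∈ range N, if i < ⌈a * N⌉₊ then
        (if lsPhi L S γ (Nat.nth (memNLS L S) i) < β then (1 : ℝ) else 0) else 0 := by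
    rw [← Finset.Ico_add_one_right_eq_Icc, Finset.sum_Ico_eq_sum_range, Nat.add_sub_cancel]
    refine Finset.sum_congr rfl fun i _ => ?_
    have hφ := lsPhi_nonneg L S hγ0.le (Nat.nth (memNLS L S) i)
    have hi : (0 : ℝ) ≤ (i : ℝ) / N := by positivity
    simp only [lsSeq, Nat.add_sub_cancel_left, Nat.cast_add, Nat.cast_one,
      add_sub_cancel_left, Set.indicator_apply, Set.mem_Ico, hφ, hi, true_and, Nat.lt_ceil,
      div_lt_iff₀ hN']
    split_ifs <;> simp
  rw [hrange, ← Finset.sum_filter, lsCount_nth hL hS]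
  refine Finset.sum_congr ?_ fun _ _ => rfl
  ext i
  simp only [Finset.mem_filter, Finset.mem_range]
  omega

end Count

/-- If `S ≥ L+2`, the `(L,S)`-point set à la van der Corput satisfies
`N · D₂(P_{L,S}(N)) ≤ C₃ N^{1−τ} log N` for all `N ≥ 2`,
where `1−τ = −log(Sγ)/log γ`. -/
theorem ls_vdc_discrepancy_S_ge_L_add_two (L S : ℕ) (hL : 0 < L) (hS : 0 < S)
    (hSL : L + 2 ≤ S)
    (γ : ℝ) (hγ0 : 0 < γ) (hγ1 : γ < 1)
    (hroot : (L : ℝ) * γ + (S : ℝ) * γ ^ 2 = 1) :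
    ∃ C₃ : ℝ, 0 < C₃ ∧ ∀ N : ℕ, 2 ≤ N →
      (N : ℝ) * discrep2 (fun n => (((n : ℝ) - 1) / N, lsSeq L S γ n)) N
        ≤ C₃ * (N : ℝ) ^ (-Real.log ((S : ℝ) * γ) / Real.log γ) * Real.log N := by
  have hρ := one_lt_mul_of_root hSL hγ0 hroot
  obtain ⟨C, hC0, hC⟩ := exists_abs_sum_nth_sub_le hL hS hγ0 hγ1 hroot hρ
  refine ⟨2 * (C + 1), by positivity, fun N hN => ?_⟩
  set e := -Real.log ((S : ℝ) * γ) / Real.log γ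
  have he0 : 0 ≤ e := div_nonneg_of_nonpos (by linarith [Real.log_pos hρ])
    (Real.log_neg hγ0 hγ1).le
  have hN0 : (0 : ℝ) < N := by exact_mod_cast (show 0 < N by omega)
  have hN2 : (2 : ℝ) ≤ N := by exact_mod_cast hN
  have hNe : 1 ≤ (N : ℝ) ^ e := Real.one_le_rpow (by linarith) he0
  have hlogN : 1 / 2 ≤ Real.log N := by
    have := Real.log_le_log (by norm_num) hN2
    linarith [Real.log_two_gt_d9]
  have hsup : discrep2 (fun n => (((n : ℝ) - 1) / N, lsSeq L S γ n)) N ≤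
      (C + 1) * (N : ℝ) ^ e / N := by
    refine Real.iSup_le (fun p => ?_) (by positivity)
    obtain ⟨⟨a, β⟩, ha0, ha1, hβ0, hβ1⟩ := p
    simp only at ha0 ha1 hβ0 hβ1 ⊢
    rw [sum_indicator_box_eq hL hS hγ0 (by omega) ha1 β]
    set K := ⌈a * N⌉₊
    have hK0 : 0 < K := Nat.ceil_pos.2 (by positivity)
    have hKN : K ≤ N := Nat.ceil_le.2 (by nlinarith)
    have hK1 : a * N ≤ K := Nat.le_ceil _
    have hK2 : (K : ℝ) < a * N + 1 := Nat.ceil_lt_add_one (by positivity)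
    have hKe : (K : ℝ) ^ e ≤ (N : ℝ) ^ e :=
      Real.rpow_le_rpow (by positivity) (by exact_mod_cast hKN) he0
    have h1 := (hC K hK0 β hβ0.le hβ1).trans (mul_le_mul_of_nonneg_left hKe hC0.le)
    have h2 : |β * (K - a * N)| ≤ 1 := by
      rw [abs_of_nonneg (mul_nonneg hβ0.le (by linarith))]
      nlinarith
    rw [le_div_iff₀ hN0]
    nth_rw 2 [← abs_of_pos hN0]
    rw [← abs_mul, sub_mul, div_mul_cancel₀ _ hN0.ne']
    calc _ = |(lsCount L S γ (Nat.nth (memNLS L S) K) β - β * K) + β * (K - a * N)| := by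
          congr 1; ring
      _ ≤ C * (N : ℝ) ^ e + 1 := (abs_add_le _ _).trans (add_le_add h1 h2)
      _ ≤ (C + 1) * (N : ℝ) ^ e := by linarith
  calc (N : ℝ) * discrep2 (fun n => (((n : ℝ) - 1) / N, lsSeq L S γ n)) N
      ≤ N * ((C + 1) * (N : ℝ) ^ e / N) := by gcongr
    _ = (C + 1) * (N : ℝ) ^ e := mul_div_cancel₀ _ hN0.ne'
    _ ≤ 2 * (C + 1) * (N : ℝ) ^ e * Real.log N := by
      have : 0 ≤ (C + 1) * (N : ℝ) ^ e := by positivity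
      nlinarith
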